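/- arXiv:2209.15130 — 2 statements merged into one kernel-verified Lean document; each statement's English description precedes it below -/
import Mathlib

section
/- Suppose f satisfies the (2r,4r)-restricted strong convexity and smoothness properties with parameter δ ∈ [0,1). Fix Y* ∈ ℝ^{p×r}_*, set X* := Y*Y*ᵀ, κ* := σ_1(Y*)/σ_r(Y*) and N := sup{⟨B, ∇f(X*)⟩ : rank(B) ≤ r, ‖B‖_F ≤ 1}. Assume 0 ≤ μ ≤ 1/3, τ₀ := (1 − μ/κ*)² − 7μ/3 > 0, δ ≤ τ₀/(4(2(κ* + μ/κ*)² + 7μ/3)) and N ≤ τ₀·σ_r(Y*)²/4. If Ŷ ∈ ℝ^{p×r}_* satisfies d(Ŷ,Y*) ≤ μσ_r(Y*)/κ* and ∇f(ŶŶᵀ)Ŷ = 0 (i.e. [Ŷ] is a Riemannian first-order stationary point of h in this region), then: (i) any Ŷ' ∈ ℝ^{p×r}_* with d(Ŷ',Y*) ≤ μσ_r(Y*)/κ* and ∇f(Ŷ'Ŷ'ᵀ)Ŷ' = 0 satisfies Ŷ' = ŶQ for some Q ∈ O(r); and (ii) d(Ŷ,Y*) ≤ (2/(τ₀·σ_r(Y*)²))·‖∇f(X*)Y*‖_F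 ≤ (2‖Y*‖/(τ₀·σ_r(Y*)²))·N. -/
open Matrix

/-- Trace inner product `⟨A,B⟩ = tr(AᵀB)`. -/
noncomputable def trInner {m n : ℕ} (A B : Matrix (Fin m) (Fin n) ℝ) : ℝ :=
  ∑ i, ∑ j, A i j * B i j

/-- Frobenius norm. -/
noncomputable def frob {m n : ℕ} (A : Matrix (Fin m) (Fin n) ℝ) : ℝ :=
  Real.sqrt (∑ i, ∑ j, (A i j) ^ 2)

open scoped Classical in
/-- The `i`-th largest eigenvalue (1-indexed, `1 ≤ i ≤ n`) of a Hermitian matrix; junk value 0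
otherwise. -/
noncomputable def eigVal {n : ℕ} (A : Matrix (Fin n) (Fin n) ℝ) (i : ℕ) : ℝ :=
  if hA : A.IsHermitian then
    if h : n - i < n then hA.eigenvalues (Tuple.sort hA.eigenvalues ⟨n - i, h⟩) else 0
  else 0

/-- The `i`-th largest singular value (1-indexed) of `Y`, so `sval Y 1 = ‖Y‖` (spectral norm)
and `sval Y r` is the least singular value. -/
noncomputable def sval {p r : ℕ} (Y : Matrix (Fin p) (Fin r) ℝ) (i : ℕ) : ℝ :=
  Real.sqrt (eigVal (Yᵀ * Y) i)

/-- `Q` is an orthogonal matrix. -/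
def IsOrtho {r : ℕ} (Q : Matrix (Fin r) (Fin r) ℝ) : Prop := Qᵀ * Q = 1

/-- The quotient distance `d(Y₁,Y₂) = min_{Q ∈ O(r)} ‖Y₂Q − Y₁‖_F`. -/
noncomputable def dOrth {p r : ℕ} (Y₁ Y₂ : Matrix (Fin p) (Fin r) ℝ) : ℝ :=
  sInf {c | ∃ Q : Matrix (Fin r) (Fin r) ℝ, IsOrtho Q ∧ c = frob (Y₂ * Q - Y₁)}


/-! ### Frobenius basics -/

open scoped Matrix.Norms.Frobenius in
theorem frob_eq_norm {m n : ℕ} (A : Matrix (Fin m) (Fin n) ℝ) : frob A = ‖A‖ := by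
  rw [Matrix.frobenius_norm_def, frob, Real.sqrt_eq_rpow]
  simp

theorem frob_nonneg {m n : ℕ} (A : Matrix (Fin m) (Fin n) ℝ) : 0 ≤ frob A :=
  Real.sqrt_nonneg _

open scoped Matrix.Norms.Frobenius in
theorem frob_add_le {m n : ℕ} (A B : Matrix (Fin m) (Fin n) ℝ) :
    frob (A + B) ≤ frob A + frob B := by
  simp only [frob_eq_norm]; exact norm_add_le A B

open scoped Matrix.Norms.Frobenius in
theorem frob_sub_le {m n : ℕ} (A B : Matrix (Fin m) (Fin n) ℝ) :
    frob (A - B) ≤ frob A + frob B := by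
  simp only [frob_eq_norm]; exact norm_sub_le A B

open scoped Matrix.Norms.Frobenius in
theorem frob_sub_comm {m n : ℕ} (A B : Matrix (Fin m) (Fin n) ℝ) :
    frob (A - B) = frob (B - A) := by
  simp only [frob_eq_norm]; exact norm_sub_rev A B

open scoped Matrix.Norms.Frobenius in
theorem frob_mul_le {m n k : ℕ} (A : Matrix (Fin m) (Fin n) ℝ) (B : Matrix (Fin n) (Fin k) ℝ) :
    frob (A * B) ≤ frob A * frob B := by
  simp only [frob_eq_norm]; exact Matrix.frobenius_norm_mul A B

open scoped Matrix.Norms.Frobenius in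
theorem frob_smul {m n : ℕ} (c : ℝ) (A : Matrix (Fin m) (Fin n) ℝ) :
    frob (c • A) = |c| * frob A := by
  simp only [frob_eq_norm]; rw [norm_smul]; rfl

open scoped Matrix.Norms.Frobenius in
theorem frob_transpose {m n : ℕ} (A : Matrix (Fin m) (Fin n) ℝ) :
    frob Aᵀ = frob A := by
  simp only [frob_eq_norm]; exact Matrix.frobenius_norm_transpose A

open scoped Matrix.Norms.Frobenius in
theorem frob_eq_zero {m n : ℕ} (A : Matrix (Fin m) (Fin n) ℝ) (h : frob A = 0) : A = 0 := by
  rw [frob_eq_norm] at h; exact norm_eq_zero.1 h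

theorem frob_zero {m n : ℕ} : frob (0 : Matrix (Fin m) (Fin n) ℝ) = 0 := by
  simp [frob]

theorem trInner_self {m n : ℕ} (A : Matrix (Fin m) (Fin n) ℝ) : trInner A A = frob A ^ 2 := by
  rw [frob, Real.sq_sqrt (by positivity)]
  simp [trInner, sq]

theorem trInner_eq {m n : ℕ} (A B : Matrix (Fin m) (Fin n) ℝ) :
    trInner A B = (Aᵀ * B).trace := by
  simp only [trInner, Matrix.trace, Matrix.diag, Matrix.mul_apply, Matrix.transpose_apply]
  rw [Finset.sum_comm]

theorem trInner_comm {m n : ℕ} (A B : Matrix (Fin m) (Fin n) ℝ) :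
    trInner A B = trInner B A := by
  simp [trInner, mul_comm]

theorem trInner_add_left {m n : ℕ} (A B C : Matrix (Fin m) (Fin n) ℝ) :
    trInner (A + B) C = trInner A C + trInner B C := by
  simp [trInner, add_mul, Finset.sum_add_distrib]

theorem trInner_add_right {m n : ℕ} (A B C : Matrix (Fin m) (Fin n) ℝ) :
    trInner A (B + C) = trInner A B + trInner A C := by
  simp [trInner, mul_add, Finset.sum_add_distrib]

theorem trInner_sub_left {m n : ℕ} (A B C : Matrix (Fin m) (Fin n) ℝ) :
    trInner (A - B) C = trInner A C - trInner B C := by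
  simp [trInner, sub_mul, Finset.sum_sub_distrib]

theorem trInner_sub_right {m n : ℕ} (A B C : Matrix (Fin m) (Fin n) ℝ) :
    trInner A (B - C) = trInner A B - trInner A C := by
  simp [trInner, mul_sub, Finset.sum_sub_distrib]

theorem trInner_smul_right {m n : ℕ} (c : ℝ) (A B : Matrix (Fin m) (Fin n) ℝ) :
    trInner A (c • B) = c * trInner A B := by
  simp only [trInner, Matrix.smul_apply, smul_eq_mul, Finset.mul_sum]
  refine Finset.sum_congr rfl fun i _ => Finset.sum_congr rfl fun j _ => by ring

theorem trInner_smul_left {m n : ℕ} (c : ℝ) (A B : Matrix (Fin m) (Fin n) ℝ) :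
    trInner (c • A) B = c * trInner A B := by
  rw [trInner_comm, trInner_smul_right, trInner_comm]

theorem trInner_neg_right {m n : ℕ} (A B : Matrix (Fin m) (Fin n) ℝ) :
    trInner A (-B) = - trInner A B := by
  simp [trInner]

theorem trInner_zero_left {m n : ℕ} (B : Matrix (Fin m) (Fin n) ℝ) :
    trInner 0 B = 0 := by
  simp [trInner]

/-- `⟨G, D Yᵀ⟩ = ⟨G Y, D⟩`. -/
theorem trInner_mul_transpose {m n k : ℕ} (G : Matrix (Fin m) (Fin n) ℝ)
    (D : Matrix (Fin m) (Fin k) ℝ) (Y : Matrix (Fin n) (Fin k) ℝ) :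
    trInner G (D * Yᵀ) = trInner (G * Y) D := by
  rw [trInner_eq, trInner_eq, Matrix.transpose_mul, ← Matrix.mul_assoc, Matrix.trace_mul_comm,
    Matrix.mul_assoc]

/-- `⟨A, M B⟩ = ⟨Mᵀ A, B⟩`. -/
theorem trInner_mul_left {m n k : ℕ} (A : Matrix (Fin m) (Fin n) ℝ)
    (M : Matrix (Fin m) (Fin k) ℝ) (B : Matrix (Fin k) (Fin n) ℝ) :
    trInner A (M * B) = trInner (Mᵀ * A) B := by
  rw [trInner_eq, trInner_eq, Matrix.transpose_mul, Matrix.transpose_transpose, Matrix.mul_assoc]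

theorem trInner_transpose {m n : ℕ} (A B : Matrix (Fin m) (Fin n) ℝ) :
    trInner Aᵀ Bᵀ = trInner A B := by
  simp only [trInner, Matrix.transpose_apply]
  rw [Finset.sum_comm]

theorem frob_add_sq {m n : ℕ} (A B : Matrix (Fin m) (Fin n) ℝ) :
    frob (A + B) ^ 2 = frob A ^ 2 + 2 * trInner A B + frob B ^ 2 := by
  rw [← trInner_self, ← trInner_self, ← trInner_self, trInner_add_left, trInner_add_right,
    trInner_add_right, trInner_comm B A]; ring

theorem frob_sub_sq {m n : ℕ} (A B : Matrix (Fin m) (Fin n) ℝ) :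
    frob (A - B) ^ 2 = frob A ^ 2 - 2 * trInner A B + frob B ^ 2 := by
  rw [← trInner_self, ← trInner_self, ← trInner_self, trInner_sub_left, trInner_sub_right,
    trInner_sub_right, trInner_comm B A]; ring

theorem abs_trInner_le {m n : ℕ} (A B : Matrix (Fin m) (Fin n) ℝ) :
    |trInner A B| ≤ frob A * frob B := by
  have hA := frob_nonneg A
  have hB := frob_nonneg B
  have h1 := frob_add_le A B
  have h2 := frob_sub_le A B
  have h1' := pow_le_pow_left₀ (frob_nonneg _) h1 2
  have h2' := pow_le_pow_left₀ (frob_nonneg _) h2 2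
  rw [frob_add_sq] at h1'
  rw [frob_sub_sq] at h2'
  rw [abs_le]
  constructor <;> nlinarith

theorem trInner_le {m n : ℕ} (A B : Matrix (Fin m) (Fin n) ℝ) :
    trInner A B ≤ frob A * frob B := (abs_le.1 (abs_trInner_le A B)).2

theorem frob_isOrtho_mul {m n : ℕ} (Q : Matrix (Fin m) (Fin m) ℝ) (hQ : IsOrtho Q)
    (A : Matrix (Fin m) (Fin n) ℝ) : frob (Q * A) = frob A := by
  have : frob (Q * A) ^ 2 = frob A ^ 2 := by
    rw [← trInner_self, ← trInner_self, trInner_mul_left, ← Matrix.mul_assoc, hQ, Matrix.one_mul]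
  exact (pow_left_inj₀ (frob_nonneg _) (frob_nonneg _) two_ne_zero).1 this

theorem IsOrtho.mul_transpose {m : ℕ} {Q : Matrix (Fin m) (Fin m) ℝ} (hQ : IsOrtho Q) :
    Q * Qᵀ = 1 := mul_eq_one_comm.1 hQ

theorem IsOrtho.transpose {m : ℕ} {Q : Matrix (Fin m) (Fin m) ℝ} (hQ : IsOrtho Q) :
    IsOrtho Qᵀ := by
  rw [IsOrtho, Matrix.transpose_transpose]; exact hQ.mul_transpose

theorem IsOrtho.mul {m : ℕ} {Q R : Matrix (Fin m) (Fin m) ℝ} (hQ : IsOrtho Q) (hR : IsOrtho R) :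
    IsOrtho (Q * R) := by
  rw [IsOrtho, Matrix.transpose_mul, Matrix.mul_assoc, ← Matrix.mul_assoc Qᵀ, hQ, Matrix.one_mul,
    hR]

theorem frob_mul_isOrtho {m n : ℕ} (Q : Matrix (Fin m) (Fin m) ℝ) (hQ : IsOrtho Q)
    (A : Matrix (Fin n) (Fin m) ℝ) : frob (A * Q) = frob A := by
  rw [← frob_transpose, Matrix.transpose_mul, frob_isOrtho_mul _ hQ.transpose, frob_transpose]

/-! ### Attainment of `dOrth` -/

theorem isCompact_ortho (r : ℕ) : IsCompact {Q : Matrix (Fin r) (Fin r) ℝ | IsOrtho Q} := by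
  have hK : IsCompact (Set.pi Set.univ (fun _ : Fin r => Set.pi Set.univ
      (fun _ : Fin r => Set.Icc (-1 : ℝ) 1))) :=
    isCompact_univ_pi fun _ => isCompact_univ_pi fun _ => isCompact_Icc
  refine IsCompact.of_isClosed_subset hK ?_ ?_
  · exact isClosed_eq (by fun_prop) continuous_const
  · intro Q hQ i _ j _
    have h1 := congrFun (congrFun (hQ : Qᵀ * Q = 1) j) j
    rw [Matrix.mul_apply, Matrix.one_apply_eq] at h1
    simp only [Matrix.transpose_apply] at h1
    have h2 : Q i j * Q i j ≤ ∑ k, Q k j * Q k j :=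
      Finset.single_le_sum (f := fun k => Q k j * Q k j) (fun k _ => mul_self_nonneg _)
        (Finset.mem_univ i)
    rw [h1] at h2
    exact abs_le.1 (abs_le_one_iff_mul_self_le_one.2 h2)

theorem dOrth_le {p r : ℕ} (Y₁ Y₂ : Matrix (Fin p) (Fin r) ℝ) (Q : Matrix (Fin r) (Fin r) ℝ)
    (hQ : IsOrtho Q) : dOrth Y₁ Y₂ ≤ frob (Y₂ * Q - Y₁) := by
  refine csInf_le ⟨0, ?_⟩ ⟨Q, hQ, rfl⟩
  rintro c ⟨Q, _, rfl⟩
  exact frob_nonneg _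

theorem exists_dOrth {p r : ℕ} (Y₁ Y₂ : Matrix (Fin p) (Fin r) ℝ) :
    ∃ Q : Matrix (Fin r) (Fin r) ℝ, IsOrtho Q ∧ frob (Y₂ * Q - Y₁) = dOrth Y₁ Y₂ := by
  have hc : Continuous (fun Q : Matrix (Fin r) (Fin r) ℝ => frob (Y₂ * Q - Y₁)) := by
    unfold frob
    refine Real.continuous_sqrt.comp ?_
    refine continuous_finsetSum _ fun i _ => continuous_finsetSum _ fun j _ => ?_
    have : Continuous (fun Q : Matrix (Fin r) (Fin r) ℝ => Y₂ * Q - Y₁) := by fun_prop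
    exact (this.matrix_elem i j).pow 2
  obtain ⟨Q, hQ, hmin⟩ := (isCompact_ortho r).exists_isMinOn
    ⟨1, by simp [IsOrtho]⟩ hc.continuousOn
  refine ⟨Q, hQ, le_antisymm ?_ (dOrth_le _ _ _ hQ)⟩
  refine le_csInf ⟨_, Q, hQ, rfl⟩ ?_
  rintro c ⟨R, hR, rfl⟩
  exact hmin hR

/-! ### Spectral facts -/

theorem exists_spectral {n : ℕ} (A : Matrix (Fin n) (Fin n) ℝ) (hA : A.IsHermitian) :
    ∃ U : Matrix (Fin n) (Fin n) ℝ, IsOrtho U ∧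
      A = U * Matrix.diagonal hA.eigenvalues * Uᵀ := by
  refine ⟨hA.eigenvectorUnitary, ?_, ?_⟩
  · have := Unitary.coe_star_mul_self hA.eigenvectorUnitary
    rw [Matrix.star_eq_conjTranspose, Matrix.conjTranspose_eq_transpose_of_trivial] at this
    exact this
  · have := hA.spectral_theorem
    rw [Unitary.conjStarAlgAut_apply, Matrix.star_eq_conjTranspose,
      Matrix.conjTranspose_eq_transpose_of_trivial] at this
    exact this

theorem trInner_diagonal_ge {n q : ℕ} (d : Fin n → ℝ) (c : ℝ) (hd : ∀ i, c ≤ d i)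
    (W : Matrix (Fin n) (Fin q) ℝ) :
    c * frob W ^ 2 ≤ trInner W (Matrix.diagonal d * W) := by
  rw [← trInner_self]
  simp only [trInner, Matrix.diagonal_mul, Finset.mul_sum]
  refine Finset.sum_le_sum fun i _ => Finset.sum_le_sum fun j _ => ?_
  nlinarith [hd i, mul_self_nonneg (W i j)]

theorem trInner_diagonal_le {n q : ℕ} (d : Fin n → ℝ) (c : ℝ) (hd : ∀ i, d i ≤ c)
    (W : Matrix (Fin n) (Fin q) ℝ) :
    trInner W (Matrix.diagonal d * W) ≤ c * frob W ^ 2 := by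
  rw [← trInner_self]
  simp only [trInner, Matrix.diagonal_mul, Finset.mul_sum]
  refine Finset.sum_le_sum fun i _ => Finset.sum_le_sum fun j _ => ?_
  nlinarith [hd i, mul_self_nonneg (W i j)]

theorem trInner_conj {n q : ℕ} (U E : Matrix (Fin n) (Fin n) ℝ) (Z : Matrix (Fin n) (Fin q) ℝ) :
    trInner Z (U * E * Uᵀ * Z) = trInner (Uᵀ * Z) (E * (Uᵀ * Z)) := by
  rw [Matrix.mul_assoc, Matrix.mul_assoc, trInner_mul_left]

theorem sval_facts {p r : ℕ} (hr : 0 < r) (Y : Matrix (Fin p) (Fin r) ℝ) (hY : Y.rank = r) :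
    0 < sval Y r ∧ sval Y r ≤ sval Y 1 ∧
    (∀ (q : ℕ) (Z : Matrix (Fin r) (Fin q) ℝ), sval Y r * frob Z ≤ frob (Y * Z)) ∧
    (∀ (q : ℕ) (Z : Matrix (Fin r) (Fin q) ℝ), frob (Y * Z) ≤ sval Y 1 * frob Z) := by
  have hA : (Yᵀ * Y).IsHermitian := by
    rw [Matrix.IsHermitian, Matrix.conjTranspose_eq_transpose_of_trivial]
    simp [Matrix.transpose_mul]
  obtain ⟨U, hU, hUA⟩ := exists_spectral _ hA
  have hpsd : (Yᵀ * Y).PosSemidef := by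
    have := Matrix.posSemidef_conjTranspose_mul_self Y
    rwa [Matrix.conjTranspose_eq_transpose_of_trivial] at this
  have hnn : ∀ i, 0 ≤ hA.eigenvalues i := fun i => hpsd.eigenvalues_nonneg i
  have hrank : (Yᵀ * Y).rank = r := by rw [Matrix.rank_transpose_mul_self, hY]
  have hne : ∀ i, hA.eigenvalues i ≠ 0 := by
    rw [hA.rank_eq_card_non_zero_eigs] at hrank
    intro i hi
    have : Fintype.card {i // hA.eigenvalues i ≠ 0} < Fintype.card (Fin r) :=
      Fintype.card_subtype_lt (x := i) (by simpa using hi)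
    rw [hrank, Fintype.card_fin] at this
    exact lt_irrefl _ this
  have hmono := Tuple.monotone_sort hA.eigenvalues
  have e1 : eigVal (Yᵀ * Y) 1 =
      hA.eigenvalues (Tuple.sort hA.eigenvalues ⟨r - 1, by omega⟩) := by
    have h : r - 1 < r := by omega
    rw [eigVal, dif_pos hA, dif_pos h]
  have er : eigVal (Yᵀ * Y) r =
      hA.eigenvalues (Tuple.sort hA.eigenvalues ⟨0, by omega⟩) := by
    have h : r - r < r := by omega
    rw [eigVal, dif_pos hA, dif_pos h]
    congr 3
    simp
  have hle : ∀ i, hA.eigenvalues i ≤ eigVal (Yᵀ * Y) 1 := by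
    intro i
    rw [e1]
    obtain ⟨j, rfl⟩ := (Tuple.sort hA.eigenvalues).surjective i
    exact hmono (show j ≤ ⟨r - 1, by omega⟩ from Fin.mk_le_mk.2 (by omega))
  have hge : ∀ i, eigVal (Yᵀ * Y) r ≤ hA.eigenvalues i := by
    intro i
    rw [er]
    obtain ⟨j, rfl⟩ := (Tuple.sort hA.eigenvalues).surjective i
    exact hmono (show ⟨0, by omega⟩ ≤ j from Fin.mk_le_mk.2 (by omega))
  have hrpos : 0 < eigVal (Yᵀ * Y) r := by
    rw [er]; exact lt_of_le_of_ne (hnn _) (hne _).symm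
  have h1r : eigVal (Yᵀ * Y) r ≤ eigVal (Yᵀ * Y) 1 := by
    rw [er]; exact hle _
  have hq : ∀ (q : ℕ) (Z : Matrix (Fin r) (Fin q) ℝ), frob (Y * Z) ^ 2 =
      trInner (Uᵀ * Z) (Matrix.diagonal hA.eigenvalues * (Uᵀ * Z)) := by
    intro q Z
    rw [← trInner_conj, ← hUA, ← trInner_self, trInner_mul_left, trInner_comm,
      Matrix.mul_assoc]
  refine ⟨Real.sqrt_pos.2 hrpos, Real.sqrt_le_sqrt h1r, ?_, ?_⟩
  · intro q Z
    refine le_of_sq_le_sq ?_ (frob_nonneg _)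
    rw [hq, mul_pow, sval, Real.sq_sqrt hrpos.le, ← frob_isOrtho_mul Uᵀ hU.transpose Z]
    exact trInner_diagonal_ge _ _ hge _
  · intro q Z
    refine le_of_sq_le_sq ?_ (mul_nonneg (Real.sqrt_nonneg _) (frob_nonneg _))
    rw [hq, mul_pow, sval, Real.sq_sqrt (hrpos.le.trans h1r),
      ← frob_isOrtho_mul Uᵀ hU.transpose Z]
    exact trInner_diagonal_le _ _ hle _

/-- Polar alignment: if `⟨Z, M Z⟩ ≥ c ‖Z‖²` with `c > 0` then there is an orthogonal `Q` with
`M Q` symmetric and `⟨Z, M Q Z⟩ ≥ c ‖Z‖²`. -/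
theorem exists_polar {r : ℕ} (M : Matrix (Fin r) (Fin r) ℝ) (c : ℝ) (hc : 0 < c)
    (hM : ∀ (q : ℕ) (Z : Matrix (Fin r) (Fin q) ℝ), c * frob Z ^ 2 ≤ trInner Z (M * Z)) :
    ∃ Q : Matrix (Fin r) (Fin r) ℝ, IsOrtho Q ∧ (M * Q)ᵀ = M * Q ∧
      ∀ (q : ℕ) (Z : Matrix (Fin r) (Fin q) ℝ), c * frob Z ^ 2 ≤ trInner Z (M * Q * Z) := by
  have hA : (M * Mᵀ).IsHermitian := by
    rw [Matrix.IsHermitian, Matrix.conjTranspose_eq_transpose_of_trivial]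
    simp [Matrix.transpose_mul]
  obtain ⟨U, hU, hUA⟩ := exists_spectral _ hA
  set l := hA.eigenvalues with hl
  have hdiag : Uᵀ * (M * Mᵀ) * U = Matrix.diagonal l := by
    rw [hUA]
    calc Uᵀ * (U * Matrix.diagonal l * Uᵀ) * U = (Uᵀ * U) * Matrix.diagonal l * (Uᵀ * U) := by
          simp only [Matrix.mul_assoc]
      _ = _ := by rw [hU]; simp
  have hlow : ∀ (q : ℕ) (Z : Matrix (Fin r) (Fin q) ℝ), c * frob Z ≤ frob (Mᵀ * Z) := by
    intro q Z
    have h1 := hM q Z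
    rw [trInner_mul_left] at h1
    have h2 := trInner_le (Mᵀ * Z) Z
    rcases (frob_nonneg Z).eq_or_lt with h0 | h0
    · rw [← h0]; simpa using frob_nonneg _
    · have : c * frob Z * frob Z ≤ frob (Mᵀ * Z) * frob Z := by nlinarith
      exact le_of_mul_le_mul_right this h0
  have hli : ∀ i, c ^ 2 ≤ l i := by
    intro i
    set E : Matrix (Fin r) (Fin 1) ℝ := fun k _ => if k = i then 1 else 0 with hE
    have hE1 : frob E = 1 := by
      simp [frob, hE]
    have h1 := hlow 1 (U * E)
    rw [frob_isOrtho_mul U hU, hE1] at h1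
    have h2 : frob (Mᵀ * (U * E)) ^ 2 = l i := by
      rw [← trInner_self, trInner_mul_left, Matrix.transpose_transpose, trInner_comm,
        ← Matrix.mul_assoc, trInner_comm, ← Matrix.mul_assoc, trInner_comm,
        ← Matrix.transpose_transpose U, ← trInner_mul_left, ← Matrix.mul_assoc,
        Matrix.transpose_transpose, ← Matrix.mul_assoc, hdiag]
      simp only [trInner, Matrix.diagonal_mul]
      simp [hE]
    nlinarith
  have hlpos : ∀ i, 0 < l i := fun i => lt_of_lt_of_le (by positivity) (hli i)
  set s : Fin r → ℝ := fun i => Real.sqrt (l i) with hs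
  have hspos : ∀ i, 0 < s i := fun i => Real.sqrt_pos.2 (hlpos i)
  have hss : ∀ i, s i * s i = l i := fun i => Real.mul_self_sqrt (hlpos i).le
  set V := Matrix.diagonal (fun i => (s i)⁻¹) with hV
  have hVt : Vᵀ = V := by simp [hV]
  have hMQ : M * (Mᵀ * U * V * Uᵀ) = U * Matrix.diagonal s * Uᵀ := by
    calc M * (Mᵀ * U * V * Uᵀ) = (M * Mᵀ) * (U * V * Uᵀ) := by simp only [Matrix.mul_assoc]
      _ = U * Matrix.diagonal l * (Uᵀ * U) * V * Uᵀ := by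
          conv_lhs => rw [hUA]
          simp only [Matrix.mul_assoc]
      _ = U * (Matrix.diagonal l * V) * Uᵀ := by rw [hU]; simp only [Matrix.mul_assoc, Matrix.one_mul]
      _ = _ := by
          rw [hV, Matrix.diagonal_mul_diagonal]
          congr 3
          funext i
          rw [← hss i]; field_simp [(hspos i).ne']
  refine ⟨Mᵀ * U * V * Uᵀ, ?_, ?_, ?_⟩
  · rw [IsOrtho]
    calc (Mᵀ * U * V * Uᵀ)ᵀ * (Mᵀ * U * V * Uᵀ)
        = U * V * (Uᵀ * (M * Mᵀ) * U) * V * Uᵀ := by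
          simp only [Matrix.transpose_mul, Matrix.transpose_transpose, hVt, Matrix.mul_assoc]
      _ = U * (V * Matrix.diagonal l * V) * Uᵀ := by rw [hdiag]; simp only [Matrix.mul_assoc]
      _ = U * 1 * Uᵀ := by
          congr 2
          rw [hV, Matrix.diagonal_mul_diagonal, Matrix.diagonal_mul_diagonal,
            ← Matrix.diagonal_one]
          congr 1
          funext i
          rw [← hss i]; field_simp [(hspos i).ne']
      _ = 1 := by rw [Matrix.mul_one, hU.mul_transpose]
  · rw [hMQ]; simp [Matrix.transpose_mul, Matrix.mul_assoc]
  · intro q Z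
    rw [hMQ, trInner_conj, ← frob_isOrtho_mul Uᵀ hU.transpose Z]
    refine trInner_diagonal_ge _ _ (fun i => ?_) _
    exact Real.le_sqrt_of_sq_le (hli i)

/-! ### Taylor and restricted Lipschitz estimates -/

theorem taylor_lower (g g1 g2 : ℝ → ℝ) (h1 : ∀ t, HasDerivAt g (g1 t) t)
    (h2 : ∀ t, HasDerivAt g1 (g2 t) t) (c : ℝ) (hc : ∀ t, c ≤ g2 t) :
    g 0 + g1 0 + c / 2 ≤ g 1 := by
  have hk : Monotone (fun t => g1 t - c * t) := by
    refine monotone_of_hasDerivAt_nonneg (f' := fun t => g2 t - c) (fun t => ?_) (fun t => ?_)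
    · have := (h2 t).sub ((hasDerivAt_id t).const_mul c)
      rw [mul_one] at this
      exact this
    · simpa using hc t
  have hd : ∀ t, HasDerivAt (fun t => g t - g1 0 * t - c / 2 * t ^ 2)
      (g1 t - g1 0 - c * t) t := by
    intro t
    have := ((h1 t).sub ((hasDerivAt_id t).const_mul (g1 0))).sub
      (((hasDerivAt_id t).pow 2).const_mul (c / 2))
    refine HasDerivAt.congr_deriv this ?_
    simp
    try ring
  have hm : MonotoneOn (fun t => g t - g1 0 * t - c / 2 * t ^ 2) (Set.Icc 0 1) := by
    refine monotoneOn_of_deriv_nonneg (convex_Icc 0 1)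
      (fun t _ => (hd t).continuousAt.continuousWithinAt)
      (fun t _ => (hd t).differentiableAt.differentiableWithinAt) ?_
    intro t ht
    rw [interior_Icc] at ht
    rw [(hd t).deriv]
    have := hk ht.1.le
    simp only [mul_zero, sub_zero] at this
    linarith
  have := hm (Set.left_mem_Icc.2 zero_le_one) (Set.right_mem_Icc.2 zero_le_one) zero_le_one
  simp only [mul_zero, sub_zero, mul_one, one_pow] at this
  norm_num at this
  linarith

theorem taylor_upper (g g1 g2 : ℝ → ℝ) (h1 : ∀ t, HasDerivAt g (g1 t) t)
    (h2 : ∀ t, HasDerivAt g1 (g2 t) t) (c : ℝ) (hc : ∀ t, g2 t ≤ c) :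
    g 1 ≤ g 0 + g1 0 + c / 2 := by
  have := taylor_lower (fun t => - g t) (fun t => - g1 t) (fun t => - g2 t)
    (fun t => (h1 t).neg) (fun t => (h2 t).neg) (-c) (fun t => neg_le_neg (hc t))
  linarith

section RSC

variable {p r : ℕ} {f : Matrix (Fin p) (Fin p) ℝ → ℝ}
    {gradf : Matrix (Fin p) (Fin p) ℝ → Matrix (Fin p) (Fin p) ℝ}
    {hessf : Matrix (Fin p) (Fin p) ℝ → Matrix (Fin p) (Fin p) ℝ → ℝ}

theorem taylor_mat
    (hgradf : ∀ X D : Matrix (Fin p) (Fin p) ℝ,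
      HasDerivAt (fun t : ℝ => f (X + t • D)) (trInner (gradf X) D) 0)
    (hhessf : ∀ X G : Matrix (Fin p) (Fin p) ℝ,
      HasDerivAt (fun t : ℝ => trInner (gradf (X + t • G)) G) (hessf X G) 0)
    {δ : ℝ}
    (hRSCS : ∀ X G : Matrix (Fin p) (Fin p) ℝ, X.rank ≤ 2 * r → G.rank ≤ 4 * r →
      (1 - δ) * (frob G) ^ 2 ≤ hessf X G ∧ hessf X G ≤ (1 + δ) * (frob G) ^ 2)
    (V : Submodule ℝ (Matrix (Fin p) (Fin p) ℝ)) (hV : ∀ X ∈ V, X.rank ≤ 2 * r)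
    (A H : Matrix (Fin p) (Fin p) ℝ) (hA : A ∈ V) (hH : H ∈ V) :
    |f (A + H) - f A - trInner (gradf A) H - frob H ^ 2 / 2| ≤ δ / 2 * frob H ^ 2 := by
  have h1 : ∀ t : ℝ, HasDerivAt (fun t : ℝ => f (A + t • H)) (trInner (gradf (A + t • H)) H) t := by
    intro t
    have h := hgradf (A + t • H) H
    have h' : HasDerivAt (fun s : ℝ => f (A + t • H + (s - t) • H))
        (trInner (gradf (A + t • H)) H) t := by
      have h0 : HasDerivAt (fun s : ℝ => f (A + t • H + s • H))
        (trInner (gradf (A + t • H)) H) (t - t) := by rw [sub_self]; exact h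
      exact h0.comp_sub_const t t
    convert h' using 2 with s
    congr 1; rw [sub_smul]; abel
  have h2 : ∀ t : ℝ, HasDerivAt (fun t : ℝ => trInner (gradf (A + t • H)) H)
      (hessf (A + t • H) H) t := by
    intro t
    have h := hhessf (A + t • H) H
    have h' : HasDerivAt (fun s : ℝ => trInner (gradf (A + t • H + (s - t) • H)) H)
        (hessf (A + t • H) H) t := by
      have h0 : HasDerivAt (fun s : ℝ => trInner (gradf (A + t • H + s • H)) H)
        (hessf (A + t • H) H) (t - t) := by rw [sub_self]; exact h
      exact h0.comp_sub_const t t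
    convert h' using 2 with s
    congr 2; rw [sub_smul]; abel
  have hb : ∀ t : ℝ, _ := fun t : ℝ => hRSCS (A + t • H) H
    (hV _ (V.add_mem hA (V.smul_mem t hH))) ((hV _ hH).trans (by omega))
  have l := taylor_lower _ _ _ h1 h2 _ (fun t => (hb t).1)
  have u := taylor_upper _ _ _ h1 h2 _ (fun t => (hb t).2)
  simp only [zero_smul, add_zero, one_smul] at l u
  rw [abs_le]
  constructor <;> linarith

theorem lipschitz_aux
    (hgradf : ∀ X D : Matrix (Fin p) (Fin p) ℝ,
      HasDerivAt (fun t : ℝ => f (X + t • D)) (trInner (gradf X) D) 0)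
    (hhessf : ∀ X G : Matrix (Fin p) (Fin p) ℝ,
      HasDerivAt (fun t : ℝ => trInner (gradf (X + t • G)) G) (hessf X G) 0)
    {δ : ℝ}
    (hRSCS : ∀ X G : Matrix (Fin p) (Fin p) ℝ, X.rank ≤ 2 * r → G.rank ≤ 4 * r →
      (1 - δ) * (frob G) ^ 2 ≤ hessf X G ∧ hessf X G ≤ (1 + δ) * (frob G) ^ 2)
    (V : Submodule ℝ (Matrix (Fin p) (Fin p) ℝ)) (hV : ∀ X ∈ V, X.rank ≤ 2 * r)
    (m h z : Matrix (Fin p) (Fin p) ℝ) (hm : m ∈ V) (hh : h ∈ V) (hz : z ∈ V) :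
    trInner (gradf (m - h) - gradf (m + h) + (2 : ℝ) • h) z ≤ δ * (frob z ^ 2 + frob h ^ 2) := by
  have T := taylor_mat hgradf hhessf hRSCS V hV
  have t1 := (abs_le.1 (T (m + h) (z - h) (V.add_mem hm hh) (V.sub_mem hz hh))).2
  have t2 := (abs_le.1 (T (m + h) (-z - h) (V.add_mem hm hh) (V.sub_mem (V.neg_mem hz) hh))).1
  have t3 := (abs_le.1 (T (m - h) (z + h) (V.sub_mem hm hh) (V.add_mem hz hh))).1
  have t4 := (abs_le.1 (T (m - h) (-z + h) (V.sub_mem hm hh) (V.add_mem (V.neg_mem hz) hh))).2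
  rw [show m + h + (z - h) = m + z by abel] at t1
  rw [show m + h + (-z - h) = m - z by abel, show -z - h = -(z + h) by abel] at t2
  rw [show m - h + (z + h) = m + z by abel] at t3
  rw [show m - h + (-z + h) = m - z by abel, show -z + h = -(z - h) by abel] at t4
  have hneg : ∀ A : Matrix (Fin p) (Fin p) ℝ, frob (-A) = frob A := fun A => by
    have := frob_smul (-1) A; simpa using this
  rw [hneg, trInner_neg_right] at t2 t4
  rw [frob_sub_sq] at t1 t4
  rw [frob_add_sq] at t2 t3
  rw [trInner_sub_right] at t1 t4
  rw [trInner_add_right] at t2 t3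
  rw [trInner_add_left, trInner_sub_left, trInner_smul_left, trInner_comm h z]
  nlinarith

theorem lipschitz_mat
    (hgradf : ∀ X D : Matrix (Fin p) (Fin p) ℝ,
      HasDerivAt (fun t : ℝ => f (X + t • D)) (trInner (gradf X) D) 0)
    (hhessf : ∀ X G : Matrix (Fin p) (Fin p) ℝ,
      HasDerivAt (fun t : ℝ => trInner (gradf (X + t • G)) G) (hessf X G) 0)
    {δ : ℝ}
    (hRSCS : ∀ X G : Matrix (Fin p) (Fin p) ℝ, X.rank ≤ 2 * r → G.rank ≤ 4 * r →
      (1 - δ) * (frob G) ^ 2 ≤ hessf X G ∧ hessf X G ≤ (1 + δ) * (frob G) ^ 2)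
    (V : Submodule ℝ (Matrix (Fin p) (Fin p) ℝ)) (hV : ∀ X ∈ V, X.rank ≤ 2 * r)
    (A B Z : Matrix (Fin p) (Fin p) ℝ) (hA : A ∈ V) (hB : B ∈ V) (hZ : Z ∈ V) :
    trInner (A - B) Z - δ * frob (A - B) * frob Z ≤ trInner (gradf A - gradf B) Z := by
  rcases (frob_nonneg Z).eq_or_lt with h0 | h0
  · have : Z = 0 := frob_eq_zero Z h0.symm
    subst this
    rw [frob_zero]; simp [trInner]
  rcases (frob_nonneg (A - B)).eq_or_lt with h1 | h1
  · have : A = B := sub_eq_zero.1 (frob_eq_zero _ h1.symm)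
    subst this
    simp [trInner, frob]
  set a := frob (A - B) with ha
  set b := frob Z with hb
  have key := lipschitz_aux hgradf hhessf hRSCS V hV ((1/2 : ℝ) • (A + B)) ((1/2 : ℝ) • (A - B))
    ((a / (2 * b)) • Z) (V.smul_mem _ (V.add_mem hA hB)) (V.smul_mem _ (V.sub_mem hA hB))
    (V.smul_mem _ hZ)
  have e1 : (1/2 : ℝ) • (A + B) - (1/2 : ℝ) • (A - B) = B := by
    rw [← smul_sub, show A + B - (A - B) = (2 : ℝ) • B by rw [two_smul]; abel, smul_smul]; norm_num
  have e2 : (1/2 : ℝ) • (A + B) + (1/2 : ℝ) • (A - B) = A := by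
    rw [← smul_add, show A + B + (A - B) = (2 : ℝ) • A by rw [two_smul]; abel, smul_smul]; norm_num
  rw [e1, e2, smul_smul, frob_smul, frob_smul, ← ha, ← hb, trInner_smul_right,
    abs_of_pos (show (0:ℝ) < a / (2 * b) by positivity),
    show (2 : ℝ) * (1/2) = 1 by norm_num, one_smul, trInner_add_left, trInner_sub_left,
    abs_of_pos (show (0:ℝ) < 1 / 2 by norm_num)] at key
  rw [trInner_sub_left (gradf A)]
  have e3 : δ * ((a / (2 * b) * b) ^ 2 + (1 / 2 * a) ^ 2) = a / (2 * b) * (δ * a * b) := by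
    field_simp; ring
  rw [e3] at key
  have := le_of_mul_le_mul_left key (show (0:ℝ) < a / (2 * b) by positivity)
  linarith

/-- matrices with column space in the span of the columns of `Y₁, Y₂` -/
def colSub (Y₁ Y₂ : Matrix (Fin p) (Fin r) ℝ) : Submodule ℝ (Matrix (Fin p) (Fin p) ℝ) where
  carrier := {X | ∃ M₁ M₂ : Matrix (Fin r) (Fin p) ℝ, X = Y₁ * M₁ + Y₂ * M₂}
  add_mem' := by
    rintro _ _ ⟨M₁, M₂, rfl⟩ ⟨N₁, N₂, rfl⟩
    exact ⟨M₁ + N₁, M₂ + N₂, by rw [Matrix.mul_add, Matrix.mul_add]; abel⟩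
  zero_mem' := ⟨0, 0, by simp⟩
  smul_mem' := by
    rintro c _ ⟨M₁, M₂, rfl⟩
    exact ⟨c • M₁, c • M₂, by simp⟩

/-- matrices with row space in the span of the columns of `Y₁, Y₂` -/
def rowSub (Y₁ Y₂ : Matrix (Fin p) (Fin r) ℝ) : Submodule ℝ (Matrix (Fin p) (Fin p) ℝ) where
  carrier := {X | ∃ M₁ M₂ : Matrix (Fin p) (Fin r) ℝ, X = M₁ * Y₁ᵀ + M₂ * Y₂ᵀ}
  add_mem' := by
    rintro _ _ ⟨M₁, M₂, rfl⟩ ⟨N₁, N₂, rfl⟩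
    exact ⟨M₁ + N₁, M₂ + N₂, by rw [Matrix.add_mul, Matrix.add_mul]; abel⟩
  zero_mem' := ⟨0, 0, by simp⟩
  smul_mem' := by
    rintro c _ ⟨M₁, M₂, rfl⟩
    exact ⟨c • M₁, c • M₂, by simp⟩

theorem rank_mul_le_r (A : Matrix (Fin p) (Fin r) ℝ) (B : Matrix (Fin r) (Fin p) ℝ) :
    (A * B).rank ≤ r :=
  (Matrix.rank_mul_le_left A B).trans (by simpa using A.rank_le_width)

theorem rank_add_le_two (A B : Matrix (Fin p) (Fin r) ℝ) (C D : Matrix (Fin r) (Fin p) ℝ) :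
    (A * C + B * D).rank ≤ 2 * r := by
  rw [← Matrix.fromCols_mul_fromRows]
  refine (Matrix.rank_mul_le_left _ _).trans ((Matrix.rank_le_card_width _).trans ?_)
  simp [two_mul]

theorem colSub_rank (Y₁ Y₂ : Matrix (Fin p) (Fin r) ℝ) :
    ∀ X ∈ colSub Y₁ Y₂, X.rank ≤ 2 * r := by
  rintro _ ⟨M₁, M₂, rfl⟩
  exact rank_add_le_two _ _ _ _

theorem rowSub_rank (Y₁ Y₂ : Matrix (Fin p) (Fin r) ℝ) :
    ∀ X ∈ rowSub Y₁ Y₂, X.rank ≤ 2 * r := by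
  rintro _ ⟨M₁, M₂, rfl⟩
  exact rank_add_le_two _ _ _ _

/-- Lower bound for `⟨∇f(YYᵀ), DDᵀ⟩`. -/
theorem grad_DD
    (hgradf : ∀ X D : Matrix (Fin p) (Fin p) ℝ,
      HasDerivAt (fun t : ℝ => f (X + t • D)) (trInner (gradf X) D) 0)
    (hhessf : ∀ X G : Matrix (Fin p) (Fin p) ℝ,
      HasDerivAt (fun t : ℝ => trInner (gradf (X + t • G)) G) (hessf X G) 0)
    {δ : ℝ} (hδ : 0 ≤ δ)
    (hRSCS : ∀ X G : Matrix (Fin p) (Fin p) ℝ, X.rank ≤ 2 * r → G.rank ≤ 4 * r →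
      (1 - δ) * (frob G) ^ 2 ≤ hessf X G ∧ hessf X G ≤ (1 + δ) * (frob G) ^ 2)
    (Ys Y D : Matrix (Fin p) (Fin r) ℝ) (s ρ N : ℝ) (hN0 : 0 ≤ N)
    (hN : ∀ B : Matrix (Fin p) (Fin p) ℝ, B.rank ≤ r →
      trInner (gradf (Ys * Ysᵀ)) B ≤ N * frob B)
    (hs : ∀ (q : ℕ) (Z : Matrix (Fin r) (Fin q) ℝ), frob (Ys * Z) ≤ s * frob Z)
    (hs0 : 0 ≤ s)
    (hρ : frob (Y - Ys) ≤ ρ) :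
    -(N + (1 + δ) * ((2 * s + ρ) * ρ)) * frob D ^ 2 ≤ trInner (gradf (Y * Yᵀ)) (D * Dᵀ) := by
  set Δ := Y - Ys with hΔ
  have hρ0 : 0 ≤ ρ := (frob_nonneg _).trans hρ
  have hYZ : frob (Y * Δᵀ) ≤ (s + ρ) * ρ := by
    have : Y * Δᵀ = Ys * Δᵀ + Δ * Δᵀ := by rw [← Matrix.add_mul]; congr 1; rw [hΔ]; abel
    rw [this]
    have h1 := hs p Δᵀ
    have h2 := frob_mul_le Δ Δᵀ
    rw [frob_transpose] at h1 h2
    have := frob_add_le (Ys * Δᵀ) (Δ * Δᵀ)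
    have := frob_nonneg Δ
    nlinarith
  have hYs : frob (Δ * Ysᵀ) ≤ s * ρ := by
    rw [← frob_transpose, Matrix.transpose_mul, Matrix.transpose_transpose]
    have h1 := hs p Δᵀ
    rw [frob_transpose] at h1
    nlinarith
  have hD2 : frob (D * Dᵀ) ≤ frob D ^ 2 := by
    have := frob_mul_le D Dᵀ
    rw [frob_transpose] at this
    nlinarith
  have s1 := lipschitz_mat hgradf hhessf hRSCS (colSub Y D) (colSub_rank Y D)
    (Y * Yᵀ) (Y * Ysᵀ) (D * Dᵀ) ⟨Yᵀ, 0, by simp⟩ ⟨Ysᵀ, 0, by simp⟩ ⟨0, Dᵀ, by simp⟩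
  have s2 := lipschitz_mat hgradf hhessf hRSCS (rowSub Ys D) (rowSub_rank Ys D)
    (Y * Ysᵀ) (Ys * Ysᵀ) (D * Dᵀ) ⟨Y, 0, by simp⟩ ⟨Ys, 0, by simp⟩ ⟨0, D, by simp⟩
  have s3 := hN (-(D * Dᵀ)) (by rw [← Matrix.neg_mul]; exact rank_mul_le_r _ _)
  rw [trInner_neg_right, show frob (-(D * Dᵀ)) = frob (D * Dᵀ) by
    have := frob_smul (-1) (D * Dᵀ); simpa using this] at s3
  have e1 : Y * Yᵀ - Y * Ysᵀ = Y * Δᵀ := by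
    rw [hΔ, Matrix.transpose_sub, Matrix.mul_sub]
  have e2 : Y * Ysᵀ - Ys * Ysᵀ = Δ * Ysᵀ := by rw [hΔ, Matrix.sub_mul]
  rw [e1, trInner_sub_left (gradf _)] at s1
  rw [e2, trInner_sub_left (gradf _)] at s2
  have c1 := (abs_le.1 (abs_trInner_le (Y * Δᵀ) (D * Dᵀ))).1
  have c2 := (abs_le.1 (abs_trInner_le (Δ * Ysᵀ) (D * Dᵀ))).1
  have hd := frob_nonneg (D * Dᵀ)
  have m1 : frob (Y * Δᵀ) * frob (D * Dᵀ) ≤ (s + ρ) * ρ * frob D ^ 2 :=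
    mul_le_mul hYZ hD2 hd (by positivity)
  have m2 : frob (Δ * Ysᵀ) * frob (D * Dᵀ) ≤ s * ρ * frob D ^ 2 :=
    mul_le_mul hYs hD2 hd (by positivity)
  have m3 : N * frob (D * Dᵀ) ≤ N * frob D ^ 2 := mul_le_mul_of_nonneg_left hD2 hN0
  have m1' := mul_le_mul_of_nonneg_left m1 hδ
  have m2' := mul_le_mul_of_nonneg_left m2 hδ
  linarith

theorem core
    (hgradf : ∀ X D : Matrix (Fin p) (Fin p) ℝ,
      HasDerivAt (fun t : ℝ => f (X + t • D)) (trInner (gradf X) D) 0)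
    (hhessf : ∀ X G : Matrix (Fin p) (Fin p) ℝ,
      HasDerivAt (fun t : ℝ => trInner (gradf (X + t • G)) G) (hessf X G) 0)
    {δ : ℝ} (hδ : 0 ≤ δ)
    (hRSCS : ∀ X G : Matrix (Fin p) (Fin p) ℝ, X.rank ≤ 2 * r → G.rank ≤ 4 * r →
      (1 - δ) * (frob G) ^ 2 ≤ hessf X G ∧ hessf X G ≤ (1 + δ) * (frob G) ^ 2)
    (Ys Y₁ Y₂ : Matrix (Fin p) (Fin r) ℝ) (s σ ρ N : ℝ) (hN0 : 0 ≤ N)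
    (hN : ∀ B : Matrix (Fin p) (Fin p) ℝ, B.rank ≤ r →
      trInner (gradf (Ys * Ysᵀ)) B ≤ N * frob B)
    (hs : ∀ (q : ℕ) (Z : Matrix (Fin r) (Fin q) ℝ), frob (Ys * Z) ≤ s * frob Z)
    (hσ : ∀ (q : ℕ) (Z : Matrix (Fin r) (Fin q) ℝ), σ * frob Z ≤ frob (Ys * Z))
    (hs0 : 0 ≤ s) (hσ0 : 0 < σ) (hρσ : ρ ≤ σ / 3)
    (hY₁ : frob (Y₁ - Ys) ≤ ρ) (hY₂ : frob (Y₂ - Ys) ≤ ρ) :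
    ∃ Q : Matrix (Fin r) (Fin r) ℝ, IsOrtho Q ∧
      ((σ - ρ) ^ 2 - 2 * δ * (s + ρ) ^ 2 - (N + (1 + δ) * ((2 * s + ρ) * ρ))) *
        frob (Y₁ - Y₂ * Q) ^ 2 ≤
      trInner (gradf (Y₁ * Y₁ᵀ) * Y₁ - gradf (Y₂ * Y₂ᵀ) * (Y₂ * Q)) (Y₁ - Y₂ * Q) := by
  have hρ0 : 0 ≤ ρ := (frob_nonneg _).trans hY₁
  -- lower and upper bounds for matrices close to `Ys`
  have hlow : ∀ (Y : Matrix (Fin p) (Fin r) ℝ) (a : ℝ), frob (Y - Ys) ≤ a →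
      ∀ (q : ℕ) (Z : Matrix (Fin r) (Fin q) ℝ), (σ - a) * frob Z ≤ frob (Y * Z) := by
    intro Y a ha q Z
    have h1 := hσ q Z
    have h2 := frob_mul_le (Y - Ys) Z
    have h3 := frob_sub_le (Y * Z) ((Y - Ys) * Z)
    rw [← Matrix.sub_mul, show Y - (Y - Ys) = Ys by abel] at h3
    have := mul_le_mul_of_nonneg_right ha (frob_nonneg Z)
    linarith
  have hup : ∀ (Y : Matrix (Fin p) (Fin r) ℝ), frob (Y - Ys) ≤ ρ →
      ∀ (q : ℕ) (Z : Matrix (Fin r) (Fin q) ℝ), frob (Y * Z) ≤ (s + ρ) * frob Z := by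
    intro Y ha q Z
    have h1 := hs q Z
    have h2 := frob_mul_le (Y - Ys) Z
    have h3 := frob_add_le (Ys * Z) ((Y - Ys) * Z)
    rw [← Matrix.add_mul, show Ys + (Y - Ys) = Y by abel] at h3
    have := mul_le_mul_of_nonneg_right ha (frob_nonneg Z)
    linarith
  have hM : ∀ (q : ℕ) (Z : Matrix (Fin r) (Fin q) ℝ),
      (σ - ρ) ^ 2 * frob Z ^ 2 ≤ trInner Z (Y₁ᵀ * Y₂ * Z) := by
    intro q Z
    set A := (1 / 2 : ℝ) • (Y₁ + Y₂) with hA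
    set B := (1 / 2 : ℝ) • (Y₁ - Y₂) with hB
    have hAB1 : A + B = Y₁ := by
      rw [hA, hB, ← smul_add, show Y₁ + Y₂ + (Y₁ - Y₂) = (2 : ℝ) • Y₁ by rw [two_smul]; abel,
        smul_smul]; norm_num
    have hAB2 : A - B = Y₂ := by
      rw [hA, hB, ← smul_sub, show Y₁ + Y₂ - (Y₁ - Y₂) = (2 : ℝ) • Y₂ by rw [two_smul]; abel,
        smul_smul]; norm_num
    set α := frob (A - Ys) with hα
    set β := frob B with hβ
    have par : α ^ 2 + β ^ 2 ≤ ρ ^ 2 := by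
      have e1 : Y₁ - Ys = (A - Ys) + B := by rw [← hAB1]; abel
      have e2 : Y₂ - Ys = (A - Ys) - B := by rw [← hAB2]; abel
      have f1 := pow_le_pow_left₀ (frob_nonneg _) hY₁ 2
      have f2 := pow_le_pow_left₀ (frob_nonneg _) hY₂ 2
      rw [e1, frob_add_sq] at f1
      rw [e2, frob_sub_sq] at f2
      linarith
    have hα0 : 0 ≤ α := frob_nonneg _
    have hβ0 : 0 ≤ β := frob_nonneg _
    have hαρ : α ≤ ρ := le_of_sq_le_sq (by nlinarith) hρ0
    have g1 := hlow A α le_rfl q Z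
    have g2 : frob (B * Z) ≤ β * frob Z := frob_mul_le B Z
    have hz := frob_nonneg Z
    have e : trInner Z (Y₁ᵀ * Y₂ * Z) = frob (A * Z) ^ 2 - frob (B * Z) ^ 2 := by
      rw [Matrix.mul_assoc, trInner_mul_left, Matrix.transpose_transpose, ← hAB1, ← hAB2,
        Matrix.add_mul, Matrix.sub_mul, trInner_add_left, trInner_sub_right, trInner_sub_right,
        trInner_self, trInner_self, trInner_comm (B * Z) (A * Z)]
      ring
    rw [e]
    have g1' := pow_le_pow_left₀ (mul_nonneg (by linarith) hz) g1 2
    have g2' := pow_le_pow_left₀ (frob_nonneg _) g2 2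
    have hc : (σ - ρ) ^ 2 ≤ (σ - α) ^ 2 - β ^ 2 := by
      nlinarith [mul_nonneg (sub_nonneg.2 hαρ) (show 0 ≤ σ - ρ - α by linarith)]
    have := mul_le_mul_of_nonneg_right hc (sq_nonneg (frob Z))
    nlinarith
  obtain ⟨Q, hQ, hsym, hP⟩ := exists_polar (Y₁ᵀ * Y₂) ((σ - ρ) ^ 2)
    (pow_pos (by linarith) 2) hM
  refine ⟨Q, hQ, ?_⟩
  have hX2 : Y₂ * Y₂ᵀ = (Y₂ * Q) * (Y₂ * Q)ᵀ := by
    rw [Matrix.transpose_mul, Matrix.mul_assoc, ← Matrix.mul_assoc Q, hQ.mul_transpose,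
      Matrix.one_mul]
  have gDD1 := grad_DD hgradf hhessf hδ hRSCS Ys Y₁ (Y₁ - Y₂ * Q) s ρ N hN0 hN hs hs0 hY₁
  have gDD2 := grad_DD hgradf hhessf hδ hRSCS Ys Y₂ (Y₁ - Y₂ * Q) s ρ N hN0 hN hs hs0 hY₂
  have low1 := hlow Y₁ ρ hY₁
  have low2 : ∀ (q : ℕ) (Z : Matrix (Fin r) (Fin q) ℝ), (σ - ρ) * frob Z ≤ frob (Y₂ * Q * Z) := by
    intro q Z
    have := hlow Y₂ ρ hY₂ q (Q * Z)
    rwa [frob_isOrtho_mul Q hQ, ← Matrix.mul_assoc] at this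
  have up1 := hup Y₁ hY₁
  have up2 : ∀ (q : ℕ) (Z : Matrix (Fin r) (Fin q) ℝ), frob (Y₂ * Q * Z) ≤ (s + ρ) * frob Z := by
    intro q Z
    have := hup Y₂ hY₂ q (Q * Z)
    rwa [frob_isOrtho_mul Q hQ, ← Matrix.mul_assoc] at this
  rw [hX2] at gDD2 ⊢
  rw [Matrix.mul_assoc] at hsym hP
  generalize Y₂ * Q = Y at *
  set D := Y₁ - Y with hD
  set W := (1 / 2 : ℝ) • (Y₁ + Y) with hW
  have hY1e : Y₁ = W + (1 / 2 : ℝ) • D := by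
    rw [hW, hD, ← smul_add, show Y₁ + Y + (Y₁ - Y) = (2 : ℝ) • Y₁ by rw [two_smul]; abel,
        smul_smul]; norm_num
  have hYe : Y = W - (1 / 2 : ℝ) • D := by
    rw [hW, hD, ← smul_sub, show Y₁ + Y - (Y₁ - Y) = (2 : ℝ) • Y by rw [two_smul]; abel,
        smul_smul]; norm_num
  have hWlow : (σ - ρ) ^ 2 * frob D ^ 2 ≤ frob (W * Dᵀ) ^ 2 := by
    have l1 := low1 p Dᵀ
    have l2 := low2 p Dᵀ
    have l3 := hP p Dᵀ
    rw [Matrix.mul_assoc, trInner_mul_left, Matrix.transpose_transpose] at l3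
    rw [frob_transpose] at l1 l2 l3
    have e : frob (W * Dᵀ) ^ 2 = 1 / 4 * (frob (Y₁ * Dᵀ) ^ 2 + 2 * trInner (Y₁ * Dᵀ) (Y * Dᵀ) +
        frob (Y * Dᵀ) ^ 2) := by
      rw [← frob_add_sq, ← Matrix.add_mul, hW, Matrix.smul_mul, frob_smul, mul_pow]
      norm_num
    have hnn : 0 ≤ (σ - ρ) * frob D := mul_nonneg (by linarith) (frob_nonneg _)
    have l1' := pow_le_pow_left₀ hnn l1 2
    have l2' := pow_le_pow_left₀ hnn l2 2
    rw [e]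
    nlinarith
  have hWup : frob (W * Dᵀ) ≤ (s + ρ) * frob D := by
    have l1 := up1 p Dᵀ
    have l2 := up2 p Dᵀ
    rw [frob_transpose] at l1 l2
    rw [hW, Matrix.smul_mul, frob_smul, abs_of_pos (by norm_num), Matrix.add_mul]
    have := frob_add_le (Y₁ * Dᵀ) (Y * Dᵀ)
    linarith
  have hT : frob (D * Wᵀ) = frob (W * Dᵀ) := by
    rw [← frob_transpose, Matrix.transpose_mul, Matrix.transpose_transpose]
  have hXX : Y₁ * Y₁ᵀ - Y * Yᵀ = D * Wᵀ + W * Dᵀ := by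
    rw [hW, hD]
    simp only [Matrix.transpose_smul, Matrix.transpose_add, Matrix.transpose_sub,
      Matrix.mul_smul, Matrix.smul_mul, Matrix.mul_add, Matrix.add_mul, Matrix.sub_mul,
      Matrix.mul_sub]
    module
  have hWD : (Wᵀ * D)ᵀ = Wᵀ * D := by
    have hsym' : Yᵀ * Y₁ = Y₁ᵀ * Y := by
      rw [← hsym, Matrix.transpose_mul, Matrix.transpose_transpose]
    rw [hW, hD]
    simp only [Matrix.transpose_smul, Matrix.transpose_add, Matrix.transpose_sub,
      Matrix.transpose_mul, Matrix.transpose_transpose,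
      Matrix.mul_smul, Matrix.smul_mul, Matrix.mul_add, Matrix.add_mul, Matrix.sub_mul,
      Matrix.mul_sub]
    rw [hsym']
  have hcross : 0 ≤ trInner (D * Wᵀ) (W * Dᵀ) := by
    have hDW : Dᵀ * W = Wᵀ * D := by
      rw [← hWD, Matrix.transpose_mul, Matrix.transpose_transpose]
    have : trInner (D * Wᵀ) (W * Dᵀ) = trInner (Wᵀ * D) (Wᵀ * D) := by
      rw [trInner_eq, trInner_eq, hWD, Matrix.transpose_mul, Matrix.transpose_transpose,
        Matrix.mul_assoc, Matrix.trace_mul_comm, ← hDW]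
      simp only [Matrix.mul_assoc]
    rw [this, trInner_self]
    positivity
  have hlip := lipschitz_mat hgradf hhessf hRSCS (colSub Y₁ Y) (colSub_rank Y₁ Y)
    (Y₁ * Y₁ᵀ) (Y * Yᵀ) (D * Wᵀ) ⟨Y₁ᵀ, 0, by simp⟩ ⟨0, Yᵀ, by simp⟩
    ⟨Wᵀ, -Wᵀ, by rw [hD, Matrix.sub_mul, Matrix.mul_neg]; abel⟩
  rw [hXX, trInner_add_left, trInner_self, trInner_comm (W * Dᵀ)] at hlip
  have hsum : frob (D * Wᵀ + W * Dᵀ) ≤ 2 * frob (W * Dᵀ) := by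
    have := frob_add_le (D * Wᵀ) (W * Dᵀ)
    linarith
  rw [hT] at hlip
  have hfin : trInner (gradf (Y₁ * Y₁ᵀ) * Y₁ - gradf (Y * Yᵀ) * Y) D =
      trInner (gradf (Y₁ * Y₁ᵀ) - gradf (Y * Yᵀ)) (D * Wᵀ) +
      1 / 2 * (trInner (gradf (Y₁ * Y₁ᵀ)) (D * Dᵀ) + trInner (gradf (Y * Yᵀ)) (D * Dᵀ)) := by
    rw [trInner_sub_left, trInner_sub_left (gradf _), ← trInner_mul_transpose,
      ← trInner_mul_transpose]
    generalize gradf (Y₁ * Y₁ᵀ) = G₁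
    generalize gradf (Y * Yᵀ) = G₂
    have a1 : D * Y₁ᵀ = D * Wᵀ + (1 / 2 : ℝ) • (D * Dᵀ) := by
      have : D * (W + (1 / 2 : ℝ) • D)ᵀ = D * Wᵀ + (1 / 2 : ℝ) • (D * Dᵀ) := by
        rw [Matrix.transpose_add, Matrix.transpose_smul (1 / 2 : ℝ) D, Matrix.mul_add,
          Matrix.mul_smul D]
      rwa [← hY1e] at this
    have a2 : D * Yᵀ = D * Wᵀ - (1 / 2 : ℝ) • (D * Dᵀ) := by
      have : D * (W - (1 / 2 : ℝ) • D)ᵀ = D * Wᵀ - (1 / 2 : ℝ) • (D * Dᵀ) := by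
        rw [Matrix.transpose_sub, Matrix.transpose_smul (1 / 2 : ℝ) D, Matrix.mul_sub,
          Matrix.mul_smul D]
      rwa [← hYe] at this
    rw [a1, a2, trInner_add_right, trInner_sub_right, trInner_smul_right, trInner_smul_right]
    ring
  rw [hfin]
  have w0 := frob_nonneg (W * Dᵀ)
  have q1 : δ * frob (D * Wᵀ + W * Dᵀ) * frob (W * Dᵀ) ≤ 2 * δ * frob (W * Dᵀ) ^ 2 := by
    have := mul_le_mul_of_nonneg_right (mul_le_mul_of_nonneg_left hsum hδ) w0
    nlinarith
  have q2 := pow_le_pow_left₀ w0 hWup 2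
  have q3 : 2 * δ * frob (W * Dᵀ) ^ 2 ≤ 2 * δ * ((s + ρ) * frob D) ^ 2 :=
    mul_le_mul_of_nonneg_left q2 (by positivity)
  nlinarith

end RSC

set_option maxHeartbeats 2000000 in
/-- a Riemannian first-order stationary point of `h` in the strong convexity
region is unique up to orthogonal transformation and is close to `Ystar`, with error controlled
by the gradient of `f` at `X = Ystar Ystarᵀ`. -/
theorem stmt13 {p r : ℕ}
    (f : Matrix (Fin p) (Fin p) ℝ → ℝ)
    (gradf : Matrix (Fin p) (Fin p) ℝ → Matrix (Fin p) (Fin p) ℝ)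
    (hessf : Matrix (Fin p) (Fin p) ℝ → Matrix (Fin p) (Fin p) ℝ → ℝ)
    (hgradf : ∀ X D : Matrix (Fin p) (Fin p) ℝ,
      HasDerivAt (fun t : ℝ => f (X + t • D)) (trInner (gradf X) D) 0)
    (hhessf : ∀ X G : Matrix (Fin p) (Fin p) ℝ,
      HasDerivAt (fun t : ℝ => trInner (gradf (X + t • G)) G) (hessf X G) 0)
    (δ : ℝ) (hδ0 : 0 ≤ δ) (hδ1 : δ < 1)
    (hRSCS : ∀ X G : Matrix (Fin p) (Fin p) ℝ, X.rank ≤ 2 * r → G.rank ≤ 4 * r →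
      (1 - δ) * (frob G) ^ 2 ≤ hessf X G ∧ hessf X G ≤ (1 + δ) * (frob G) ^ 2)
    (Ystar : Matrix (Fin p) (Fin r) ℝ) (hYs : Ystar.rank = r)
    (X : Matrix (Fin p) (Fin p) ℝ) (hX : X = Ystar * Ystarᵀ)
    (N : ℝ) (hN : N = sSup {c : ℝ | ∃ B : Matrix (Fin p) (Fin p) ℝ,
      B.rank ≤ r ∧ frob B ≤ 1 ∧ c = trInner B (gradf X)})
    (κ : ℝ) (hκ : κ = sval Ystar 1 / sval Ystar r)
    (μ : ℝ) (hμ0 : 0 ≤ μ) (hμ1 : μ ≤ 1 / 3)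
    (τ₀ : ℝ) (hτ₀ : τ₀ = (1 - μ / κ) ^ 2 - 7 * μ / 3) (hτpos : 0 < τ₀)
    (hδle : δ ≤ τ₀ / (4 * (2 * (κ + μ / κ) ^ 2 + 7 * μ / 3)))
    (hNle : N ≤ τ₀ * (sval Ystar r) ^ 2 / 4)
    (Yhat : Matrix (Fin p) (Fin r) ℝ) (hYhat : Yhat.rank = r)
    (hYhatd : dOrth Yhat Ystar ≤ μ * sval Ystar r / κ)
    (hYhatFOSP : gradf (Yhat * Yhatᵀ) * Yhat = 0) :
    (∀ Yhat' : Matrix (Fin p) (Fin r) ℝ, Yhat'.rank = r →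
      dOrth Yhat' Ystar ≤ μ * sval Ystar r / κ →
      gradf (Yhat' * Yhat'ᵀ) * Yhat' = 0 →
      ∃ Q : Matrix (Fin r) (Fin r) ℝ, IsOrtho Q ∧ Yhat' = Yhat * Q) ∧
    dOrth Yhat Ystar ≤ 2 / (τ₀ * (sval Ystar r) ^ 2) * frob (gradf X * Ystar) ∧
    2 / (τ₀ * (sval Ystar r) ^ 2) * frob (gradf X * Ystar) ≤
      2 * sval Ystar 1 / (τ₀ * (sval Ystar r) ^ 2) * N := by

  rcases Nat.eq_zero_or_pos r with hr | hr
  · subst hr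
    have hsv : sval Ystar 0 = 0 := by simp [sval, eigVal]
    have hf : ∀ A : Matrix (Fin p) (Fin 0) ℝ, frob A = 0 := fun A => by simp [frob]
    have hd : dOrth Yhat Ystar ≤ 0 := by
      have := dOrth_le Yhat Ystar 1 (by simp [IsOrtho])
      rwa [hf] at this
    refine ⟨fun Y' _ _ _ => ⟨1, by simp [IsOrtho], Subsingleton.elim _ _⟩, ?_, ?_⟩
    · rw [hf, mul_zero]; exact hd
    · rw [hsv]; simp
  obtain ⟨hσ0, hσs, hσ, hs⟩ := sval_facts hr Ystar hYs
  set σ := sval Ystar r with hσdef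
  set s := sval Ystar 1 with hsdef
  have hs0 : 0 < s := lt_of_lt_of_le hσ0 hσs
  have hκ0 : 0 < κ := by rw [hκ]; positivity
  have hκ1 : 1 ≤ κ := by rw [hκ, le_div_iff₀ hσ0]; linarith
  have hκσ : κ * σ = s := by rw [hκ]; field_simp
  subst hX
  -- properties of N
  set S := {c : ℝ | ∃ B : Matrix (Fin p) (Fin p) ℝ,
      B.rank ≤ r ∧ frob B ≤ 1 ∧ c = trInner B (gradf (Ystar * Ystarᵀ))} with hS
  have hbdd : BddAbove S := by
    refine ⟨frob (gradf (Ystar * Ystarᵀ)), ?_⟩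
    rintro c ⟨B, _, hB, rfl⟩
    refine (trInner_le _ _).trans ?_
    exact mul_le_of_le_one_left (frob_nonneg _) hB
  have hN0 : 0 ≤ N := by
    rw [hN]
    refine le_csSup hbdd ⟨0, by simp, by rw [frob_zero]; exact zero_le_one, ?_⟩
    rw [trInner_zero_left]
  have hNB : ∀ B : Matrix (Fin p) (Fin p) ℝ, B.rank ≤ r →
      trInner (gradf (Ystar * Ystarᵀ)) B ≤ N * frob B := by
    intro B hB
    rcases (frob_nonneg B).eq_or_lt with h0 | h0
    · have : B = 0 := frob_eq_zero B h0.symm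
      subst this
      rw [trInner_comm, trInner_zero_left, frob_zero, mul_zero]
    · have : trInner ((frob B)⁻¹ • B) (gradf (Ystar * Ystarᵀ)) ≤ N := by
        rw [hN]
        refine le_csSup hbdd ⟨_, ?_, ?_, rfl⟩
        · have e : (frob B)⁻¹ • B = B * ((frob B)⁻¹ • (1 : Matrix (Fin p) (Fin p) ℝ)) := by
            rw [Matrix.mul_smul, Matrix.mul_one]
          rw [e]
          exact (Matrix.rank_mul_le_left _ _).trans hB
        · rw [frob_smul, abs_of_pos (inv_pos.2 h0), inv_mul_cancel₀ h0.ne']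
      rw [trInner_smul_left, inv_mul_le_iff₀ h0] at this
      rw [trInner_comm]; linarith
  set ρ := μ * σ / κ with hρdef
  have hρ0 : 0 ≤ ρ := by positivity
  have hρ3 : ρ ≤ σ / 3 := by
    rw [hρdef, div_le_iff₀ hκ0]
    nlinarith [mul_le_mul_of_nonneg_right hμ1 hσ0.le, mul_le_mul_of_nonneg_left hκ1 hσ0.le]
  have hρs : ρ * s = μ * σ ^ 2 := by rw [hρdef, ← hκσ]; field_simp
  have hρμ : μ / κ * σ = ρ := by rw [hρdef]; ring
  -- coefficient
  have hcoef : τ₀ * σ ^ 2 / 2 ≤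
      (σ - ρ) ^ 2 - 2 * δ * (s + ρ) ^ 2 - (N + (1 + δ) * ((2 * s + ρ) * ρ)) := by
    have e1 : (σ - ρ) ^ 2 = (1 - μ / κ) ^ 2 * σ ^ 2 := by rw [← hρμ]; ring
    have e2 : (s + ρ) ^ 2 = (κ + μ / κ) ^ 2 * σ ^ 2 := by rw [← hρμ, ← hκσ]; ring
    have e3 : (2 * s + ρ) * ρ ≤ 7 * μ / 3 * σ ^ 2 := by nlinarith
    have hpos : 0 < 4 * (2 * (κ + μ / κ) ^ 2 + 7 * μ / 3) := by
      have : 0 ≤ μ / κ := by positivity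
      have : 0 < κ + μ / κ := by linarith
      positivity
    rw [le_div_iff₀ hpos] at hδle
    have e4 := mul_le_mul_of_nonneg_right hδle (sq_nonneg σ)
    have e5 := mul_le_mul_of_nonneg_left e3 (show 0 ≤ 1 + δ by linarith)
    rw [e1, e2]
    have e6 : (1 - μ / κ) ^ 2 = τ₀ + 7 * μ / 3 := by rw [hτ₀]; ring
    rw [e6]
    nlinarith
  have hτσ : 0 < τ₀ * σ ^ 2 := by positivity
  -- rotation
  have hrot : ∀ Y : Matrix (Fin p) (Fin r) ℝ, dOrth Y Ystar ≤ ρ →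
      ∃ Q : Matrix (Fin r) (Fin r) ℝ, IsOrtho Q ∧ frob (Y * Qᵀ - Ystar) ≤ ρ ∧ (Y * Qᵀ) * (Y * Qᵀ)ᵀ = Y * Yᵀ := by
    intro Y hY
    obtain ⟨Q, hQ, hd⟩ := exists_dOrth Y Ystar
    refine ⟨Q, hQ, ?_, ?_⟩
    · rw [← hd, frob_sub_comm, ← frob_mul_isOrtho Qᵀ hQ.transpose, Matrix.sub_mul,
        Matrix.mul_assoc, hQ.mul_transpose, Matrix.mul_one] at hY
      exact hY
    · rw [Matrix.transpose_mul, Matrix.transpose_transpose, Matrix.mul_assoc,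
        ← Matrix.mul_assoc Qᵀ, hQ, Matrix.one_mul]
  have hcore := fun Y₁ Y₂ h₁ h₂ => core hgradf hhessf hδ0 hRSCS Ystar Y₁ Y₂ s σ ρ N hN0 hNB hs hσ
    hs0.le hσ0 hρ3 h₁ h₂
  obtain ⟨Q₁, hQ₁, hd₁, hX₁⟩ := hrot Yhat hYhatd
  have hst₁ : gradf (Yhat * Q₁ᵀ * (Yhat * Q₁ᵀ)ᵀ) * (Yhat * Q₁ᵀ) = 0 := by
    rw [hX₁, ← Matrix.mul_assoc, hYhatFOSP, Matrix.zero_mul]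
  refine ⟨?_, ?_, ?_⟩
  · intro Y' _ hd' hst'
    obtain ⟨Q₂, hQ₂, hd₂, hX₂⟩ := hrot Y' hd'
    obtain ⟨Q, hQ, hQc⟩ := hcore _ _ hd₂ hd₁
    have hst₂ : gradf (Y' * Q₂ᵀ * (Y' * Q₂ᵀ)ᵀ) * (Y' * Q₂ᵀ) = 0 := by
      rw [hX₂, ← Matrix.mul_assoc, hst', Matrix.zero_mul]
    rw [hst₂, ← Matrix.mul_assoc, hst₁, Matrix.zero_mul, sub_zero, trInner_zero_left] at hQc
    have h1 := mul_le_mul_of_nonneg_right hcoef (sq_nonneg (frob (Y' * Q₂ᵀ - Yhat * Q₁ᵀ * Q)))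
    have h2 : frob (Y' * Q₂ᵀ - Yhat * Q₁ᵀ * Q) ^ 2 = 0 := by
      refine le_antisymm ?_ (sq_nonneg _)
      by_contra hcon
      push Not at hcon
      have := mul_pos (half_pos hτσ) hcon
      linarith
    have h3 := sub_eq_zero.1 (frob_eq_zero _ (pow_eq_zero_iff two_ne_zero |>.1 h2))
    refine ⟨Q₁ᵀ * Q * Q₂, (hQ₁.transpose.mul hQ).mul hQ₂, ?_⟩
    calc Y' = Y' * Q₂ᵀ * Q₂ := by rw [Matrix.mul_assoc, hQ₂, Matrix.mul_one]
      _ = _ := by rw [h3]; simp only [Matrix.mul_assoc]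
  · obtain ⟨Q, hQ, hQc⟩ := hcore (Yhat * Q₁ᵀ) Ystar hd₁ (by rw [sub_self, frob_zero]; exact hρ0)
    rw [hst₁] at hQc
    set D := Yhat * Q₁ᵀ - Ystar * Q with hD
    have hdle : dOrth Yhat Ystar ≤ frob D := by
      refine (dOrth_le Yhat Ystar (Q * Q₁) (hQ.mul hQ₁)).trans (le_of_eq ?_)
      rw [frob_sub_comm, ← frob_mul_isOrtho Q₁ᵀ hQ₁.transpose, Matrix.sub_mul, Matrix.mul_assoc,
        Matrix.mul_assoc Q, hQ₁.mul_transpose, Matrix.mul_one]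
    refine hdle.trans ?_
    have hc1 := (abs_le.1 (abs_trInner_le (gradf (Ystar * Ystarᵀ) * (Ystar * Q)) D)).1
    rw [← Matrix.mul_assoc, frob_mul_isOrtho Q hQ] at hc1
    rw [trInner_sub_left, trInner_zero_left, ← Matrix.mul_assoc] at hQc
    have h1 := mul_le_mul_of_nonneg_right hcoef (sq_nonneg (frob D))
    rw [div_mul_eq_mul_div, le_div_iff₀ hτσ]
    rcases (frob_nonneg D).eq_or_lt with h0 | h0
    · rw [← h0, zero_mul]; have := frob_nonneg (gradf (Ystar * Ystarᵀ) * Ystar); positivity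
    · have : (frob D * (τ₀ * σ ^ 2)) * frob D ≤
          (2 * frob (gradf (Ystar * Ystarᵀ) * Ystar)) * frob D := by nlinarith
      exact le_of_mul_le_mul_right this h0
  · have hV : frob (gradf (Ystar * Ystarᵀ) * Ystar) ≤ s * N := by
      set V := gradf (Ystar * Ystarᵀ) * Ystar with hVdef
      have h1 := hNB (V * Ystarᵀ) (rank_mul_le_r _ _)
      rw [trInner_mul_transpose, ← hVdef, trInner_self] at h1
      have h2 : frob (V * Ystarᵀ) ≤ s * frob V := by
        have := hs p Vᵀ
        rwa [← frob_transpose, Matrix.transpose_mul, Matrix.transpose_transpose,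
          frob_transpose V] at this
      have h3 := mul_le_mul_of_nonneg_left h2 hN0
      rcases (frob_nonneg V).eq_or_lt with h0 | h0
      · rw [← h0]; positivity
      · have : frob V * frob V ≤ (s * N) * frob V := by nlinarith
        exact le_of_mul_le_mul_right this h0
    have := mul_le_mul_of_nonneg_left hV (show 0 ≤ 2 / (τ₀ * σ ^ 2) by positivity)
    refine this.trans (le_of_eq ?_)
    ring
end

section
/- Let f : ℝ^{p×p} → ℝ be twice continuously differentiable and satisfy the (r,2r)-restricted strict convexity property: ∇²f(X)[G,G] > 0 for every X ∈ ℝ^{p×p} with rank(X) ≤ r and every nonzero G ∈ ℝ^{p×p} with rank(G) ≤ 2r. Let Ŷ ∈ ℝ^{p×r}_* be such that ŶŶᵀ is a local minimizer of f over the set {X ∈ ℝ^{p×p} : X symmetric, X positive semidefinite, rank(X) ≤ 2r}. Then the lifted Riemannian Hessian of h([Y]) := f(YYᵀ) at [Ŷ] is positive definite: for every nonzero θ ∈ ℝ^{p×r} with Ŷᵀθ symmetric, ∇²f(ŶŶᵀ)[Ŷθᵀ + θŶᵀ, Ŷθᵀ + θŶᵀ] + 2⟨∇f(ŶŶᵀ),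 θθᵀ⟩ > 0. (Consequently there exists a neighborhood of [Ŷ] on which h is geodesically convex.) -/
open Matrix

/-- under (r,2r)-restricted strict convexity of `f`, at a full-rank local
minimizer of `f` over PSD matrices of rank at most `2r`, the lifted Riemannian Hessian
quadratic form of `h([Y]) = f(YYᵀ)` is positive definite on horizontal directions. -/
theorem stmt17 {p r : ℕ}
    (f : Matrix (Fin p) (Fin p) ℝ → ℝ)
    (gradf : Matrix (Fin p) (Fin p) ℝ → Matrix (Fin p) (Fin p) ℝ)
    (hessf : Matrix (Fin p) (Fin p) ℝ → Matrix (Fin p) (Fin p) ℝ → ℝ)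
    (hgradf : ∀ X D : Matrix (Fin p) (Fin p) ℝ,
      HasDerivAt (fun t : ℝ => f (X + t • D)) (trInner (gradf X) D) 0)
    (hhessf : ∀ X G : Matrix (Fin p) (Fin p) ℝ,
      HasDerivAt (fun t : ℝ => trInner (gradf (X + t • G)) G) (hessf X G) 0)
    (hstrict : ∀ X G : Matrix (Fin p) (Fin p) ℝ, X.rank ≤ r → G.rank ≤ 2 * r → G ≠ 0 →
      0 < hessf X G)
    (Yhat : Matrix (Fin p) (Fin r) ℝ) (hYhat : Yhat.rank = r)
    (hlocmin : ∃ ε > (0 : ℝ), ∀ X : Matrix (Fin p) (Fin p) ℝ, X.PosSemidef →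
      X.rank ≤ 2 * r → frob (X - Yhat * Yhatᵀ) < ε → f (Yhat * Yhatᵀ) ≤ f X) :
    ∀ θ : Matrix (Fin p) (Fin r) ℝ, θ ≠ 0 → (Yhatᵀ * θ).IsSymm →
      0 < hessf (Yhat * Yhatᵀ) (Yhat * θᵀ + θ * Yhatᵀ) +
        2 * trInner (gradf (Yhat * Yhatᵀ)) (θ * θᵀ) := by
  intro θ hθ hsym
  have hcard : Fintype.card (Fin r) = r := Fintype.card_fin r
  have hrk : ∀ {k : ℕ} (A : Matrix (Fin p) (Fin r) ℝ) (B : Matrix (Fin r) (Fin k) ℝ),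
      (A * B).rank ≤ r := by
    intro k A B
    refine (Matrix.rank_mul_le_left A B).trans ?_
    simpa using Matrix.rank_le_width A
  have hrk2 : ∀ (A B : Matrix (Fin p) (Fin r) ℝ) (C D : Matrix (Fin r) (Fin p) ℝ),
      (A * C + B * D).rank ≤ 2 * r := by
    intro A B C D
    rw [← Matrix.fromCols_mul_fromRows]
    refine (Matrix.rank_mul_le_left _ _).trans ((Matrix.rank_le_card_width _).trans ?_)
    simp [two_mul]
  -- first-order term
  have h1 : 0 ≤ trInner (gradf (Yhat * Yhatᵀ)) (θ * θᵀ) := by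
    obtain ⟨ε, hε, hmin⟩ := hlocmin
    have hd := (hgradf (Yhat * Yhatᵀ) (θ * θᵀ)).tendsto_slope_zero_right
    refine ge_of_tendsto hd ?_
    have hcont : Continuous (fun t : ℝ =>
        frob (Yhat * Yhatᵀ + t • (θ * θᵀ) - Yhat * Yhatᵀ)) := by
      unfold frob
      simp only [Matrix.sub_apply, Matrix.add_apply, Matrix.smul_apply]
      fun_prop
    have hev : ∀ᶠ t in nhds (0 : ℝ),
        frob (Yhat * Yhatᵀ + t • (θ * θᵀ) - Yhat * Yhatᵀ) < ε := by
      apply hcont.continuousAt.eventually_lt continuousAt_const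
      simpa [frob] using hε
    filter_upwards [nhdsWithin_le_nhds hev, self_mem_nhdsWithin] with t ht ht0
    have ht0' : (0 : ℝ) < t := ht0
    have hle : f (Yhat * Yhatᵀ) ≤ f (Yhat * Yhatᵀ + t • (θ * θᵀ)) := by
      apply hmin _ _ _ ht
      · have ha : (Yhat * Yhatᵀ).PosSemidef := by
          simpa using Matrix.posSemidef_self_mul_conjTranspose Yhat
        have hb : (θ * θᵀ).PosSemidef := by
          simpa using Matrix.posSemidef_self_mul_conjTranspose θ
        exact ha.add (hb.smul ht0'.le)
      · rw [← Matrix.smul_mul]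
        exact hrk2 _ _ _ _
    simp only [zero_add, zero_smul, add_zero, smul_eq_mul]
    exact mul_nonneg (inv_nonneg.mpr ht0'.le) (sub_nonneg.mpr hle)
  -- the direction is nonzero
  have hG : Yhat * θᵀ + θ * Yhatᵀ ≠ 0 := by
    intro h0
    have hS : θᵀ * Yhat = Yhatᵀ * θ := by
      have := hsym.eq
      simpa [Matrix.transpose_mul] using this
    have e1 : Yhat * (Yhatᵀ * θ) + θ * (Yhatᵀ * Yhat) = 0 := by
      have := congrArg (fun A => A * Yhat) h0
      simpa [Matrix.add_mul, Matrix.mul_assoc, hS] using this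
    have hYS : Yhat * (Yhatᵀ * θ) = 0 := by
      rw [← Matrix.trace_conjTranspose_mul_self_eq_zero_iff]
      have e2 := congrArg (fun A => ((Yhatᵀ * θ) * (Yhatᵀ * A)).trace) e1
      simp only [Matrix.mul_add, Matrix.trace_add, Matrix.mul_zero, Matrix.trace_zero] at e2
      have e3 : ((Yhatᵀ * θ) * (Yhatᵀ * (θ * (Yhatᵀ * Yhat)))).trace
          = ((Yhatᵀ * θ) * (Yhatᵀ * (Yhat * (Yhatᵀ * θ)))).trace := by
        have a1 : (Yhatᵀ * θ) * (Yhatᵀ * (θ * (Yhatᵀ * Yhat)))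
          = (Yhatᵀ * θ) * ((Yhatᵀ * θ) * (Yhatᵀ * Yhat)) := by simp only [Matrix.mul_assoc]
        have a2 : (Yhatᵀ * θ) * (Yhatᵀ * (Yhat * (Yhatᵀ * θ)))
          = ((Yhatᵀ * θ) * (Yhatᵀ * Yhat)) * (Yhatᵀ * θ) := by simp only [Matrix.mul_assoc]
        rw [a1, a2, Matrix.trace_mul_comm]
      have e4 : (Yhat * (Yhatᵀ * θ))ᴴ * (Yhat * (Yhatᵀ * θ))
          = (Yhatᵀ * θ) * (Yhatᵀ * (Yhat * (Yhatᵀ * θ))) := by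
        rw [Matrix.conjTranspose_eq_transpose_of_trivial, Matrix.transpose_mul, hsym.eq,
          Matrix.mul_assoc]
      rw [e4]
      linarith
    rw [hYS, zero_add] at e1
    have hu : IsUnit (Yhatᵀ * Yhat) := by
      rw [← Matrix.mulVec_surjective_iff_isUnit]
      have hr : (Yhatᵀ * Yhat).rank = r := by rw [Matrix.rank_transpose_mul_self, hYhat]
      have htop : LinearMap.range (Yhatᵀ * Yhat).mulVecLin = ⊤ := by
        apply Submodule.eq_top_of_finrank_eq
        rw [← Matrix.rank, hr]
        simp
      exact LinearMap.range_eq_top.mp htop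
    apply hθ
    have hdet := (Matrix.isUnit_iff_isUnit_det _).mp hu
    rw [← Matrix.mul_nonsing_inv_cancel_right (Yhatᵀ * Yhat) θ hdet, e1, Matrix.zero_mul]
  have h2 := hstrict (Yhat * Yhatᵀ) (Yhat * θᵀ + θ * Yhatᵀ) (hrk _ _) (hrk2 _ _ _ _) hG
  linarith
end
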